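/- Let ħ > 0, let V : ℝ → ℝ be a Schwartz function, let x ∈ ℝ, and let f : ℝ → ℂ be a Schwartz function. Then the first moment of the nonlocal Wigner potential term satisfies ∫_ℝ v (Θ[V]f)(x,v) dv = V'(x) ∫_ℝ f(v) dv. -/

import Mathlib

open MeasureTheory Complex

/-- The one-dimensional nonlocal Wigner potential operator
`(Θ[V]f)(x,v) = (-i)/(2πℏ²) ∫ [V(x+y/2) - V(x-y/2)] e^{iyv/ℏ} (∫ f(w) e^{-iyw/ℏ} dw) dy`. -/
noncomputable def wignerTheta (ℏ : ℝ) (V : ℝ → ℝ) (f : ℝ → ℂ) (x v : ℝ) : ℂ :=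
  (-Complex.I) / (2 * Real.pi * ℏ ^ 2) *
    ∫ y : ℝ, ((V (x + y / 2) - V (x - y / 2) : ℝ) : ℂ) *
      Complex.exp (Complex.I * y * v / ℏ) *
      ∫ w : ℝ, f w * Complex.exp (-Complex.I * y * w / ℏ)

/-! After rescaling `y = 2πℏs`, the operator `Θ[V](x, ·)` is the Fourier multiplier with symbol
`σ(s) = -(i/ℏ) (V(x + πℏs) - V(x - πℏs))`. The first moment of a Schwartz function is `i/(2π)`
times the derivative of its Fourier transform at `0`; here the transform is `σ · 𝓕 f`, and since
`σ(0) = 0` and `σ'(0) = -2πi V'(x)`, that derivative is `-2πi V'(x) ∫ f`. -/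

open SchwartzMap (fourierMultiplierCLM smulLeftCLM)
open scoped FourierTransform LineDeriv Real SchwartzMap

section Calculus

variable {𝕜 F : Type*} [NormedAddCommGroup F]

theorem hasDerivAt_sub_symmetric [NontriviallyNormedField 𝕜] [NormedSpace 𝕜 F] {f : 𝕜 → F} {f' : F}
    {x : 𝕜} (a : 𝕜) (hf : HasDerivAt f f' x) :
    HasDerivAt (fun s ↦ f (x + a * s) - f (x - a * s)) ((2 * a) • f') 0 := by
  have hline : HasDerivAt (fun s ↦ a * s) a 0 := by
    simpa using (hasDerivAt_id (0 : 𝕜)).const_mul a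
  have hadd : HasDerivAt (fun s ↦ f (x + a * s)) (a • f') 0 :=
    HasDerivAt.scomp_of_eq 0 hf (hline.const_add x) (by simp)
  have hsub : HasDerivAt (fun s ↦ f (x - a * s)) (-a • f') 0 :=
    HasDerivAt.scomp_of_eq 0 hf (hline.const_sub x) (by simp)
  convert hadd.fun_sub hsub using 1
  module

theorem lineDerivOp_smulLeftCLM_apply {E : Type*} [NormedAddCommGroup E] [NormedSpace ℝ E]
    [RCLike 𝕜] [NormedSpace ℝ F] [NormedSpace 𝕜 F] {g : E → 𝕜} (hg : g.HasTemperateGrowth)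
    (f : 𝓢(E, F)) (m v : E) :
    ∂_{m} (smulLeftCLM F g f) v = g v • ∂_{m} f v + fderiv ℝ g v m • f v := by
  have hgv : DifferentiableAt ℝ g v := (hg.1.differentiable (by simp)).differentiableAt
  simp only [SchwartzMap.lineDerivOp_apply_eq_fderiv, SchwartzMap.smulLeftCLM_apply hg]
  rw [fderiv_fun_smul hgv f.differentiableAt]
  simp

end Calculus

section FirstMoment

variable {E F : Type*} [NormedAddCommGroup E] [InnerProductSpace ℝ E] [FiniteDimensional ℝ E]
  [MeasurableSpace E] [BorelSpace E] [NormedAddCommGroup F] [NormedSpace ℂ F]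

theorem fourier_apply_zero (f : E → F) : 𝓕 f 0 = ∫ v, f v := by
  simp [Real.fourier_eq]

theorem lineDerivOp_fourier_apply_zero (f : 𝓢(E, F)) (m : E) :
    ∂_{m} (𝓕 f) 0 = -(2 * π * I) • ∫ v, inner ℝ v m • f v := by
  have hm : (fun v : E ↦ inner ℝ v m).HasTemperateGrowth := by fun_prop
  rw [SchwartzMap.lineDerivOp_fourier_eq, SchwartzMap.fourier_coe, fourier_apply_zero,
    ← integral_smul]
  simp only [smul_apply, SchwartzMap.smulLeftCLM_apply_apply hm]

theorem integral_inner_smul_fourierMultiplierCLM [CompleteSpace F] {g : E → ℂ}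
    (hg : g.HasTemperateGrowth) (f : 𝓢(E, F)) (m : E) :
    ∫ v, inner ℝ v m • fourierMultiplierCLM F g f v =
      g 0 • (∫ v, inner ℝ v m • f v) + (I / (2 * π) * fderiv ℝ g 0 m) • ∫ v, f v := by
  have hπ : (π : ℂ) ≠ 0 := mod_cast Real.pi_ne_zero
  have hI : -(2 * π * I) * (I / (2 * π)) = 1 := by
    field_simp
    simp
  have hderiv : -(2 * π * I) • ∫ v, inner ℝ v m • fourierMultiplierCLM F g f v =
      g 0 • ∂_{m} (𝓕 f) 0 + fderiv ℝ g 0 m • 𝓕 f 0 := by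
    rw [← lineDerivOp_fourier_apply_zero, SchwartzMap.fourierMultiplierCLM_apply,
      FourierTransform.fourier_fourierInv_eq, lineDerivOp_smulLeftCLM_apply hg]
  apply smul_right_injective F (left_ne_zero_of_mul_eq_one hI)
  beta_reduce
  rw [hderiv, lineDerivOp_fourier_apply_zero, SchwartzMap.fourier_coe, fourier_apply_zero,
    smul_add, smul_comm (g 0), smul_smul _ (I / _ * _), ← mul_assoc, hI, one_mul]

end FirstMoment

/-- The symbol of the Wigner potential operator `Θ[V](x, ·)` as a Fourier multiplier, as a function
of the frequency `s` dual to `v` for Mathlib's normalisation `e^{-2πisv}` of the Fourier transform,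
so that the variable `y` in the definition of `Θ` is `2πℏs`. -/
noncomputable def wignerSymbol (ℏ : ℝ) (V : ℝ → ℝ) (x s : ℝ) : ℂ :=
  -I / ℏ * ((V (x + π * ℏ * s) - V (x - π * ℏ * s) : ℝ) : ℂ)

theorem wignerSymbol_zero (ℏ : ℝ) (V : ℝ → ℝ) (x : ℝ) : wignerSymbol ℏ V x 0 = 0 := by
  simp [wignerSymbol]

theorem hasTemperateGrowth_wignerSymbol (ℏ : ℝ) {V : ℝ → ℝ}
    (hV : V.HasTemperateGrowth) (x : ℝ) :
    (wignerSymbol ℏ V x).HasTemperateGrowth := by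
  unfold wignerSymbol
  fun_prop

theorem hasDerivAt_wignerSymbol_zero {ℏ : ℝ} (hℏ : ℏ ≠ 0) {V : ℝ → ℝ} {V' x : ℝ}
    (hV : HasDerivAt V V' x) :
    HasDerivAt (wignerSymbol ℏ V x) (-(2 * π * I) * V') 0 := by
  refine ((hasDerivAt_sub_symmetric (π * ℏ) hV).ofReal_comp.const_mul (-I / ℏ)).congr_deriv ?_
  have : (ℏ : ℂ) ≠ 0 := mod_cast hℏ
  simp only [smul_eq_mul]
  push_cast
  field_simp

theorem integral_mul_cexp_eq_fourier (f : ℝ → ℂ) (ℏ y : ℝ) :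
    ∫ w : ℝ, f w * cexp (-I * y * w / ℏ) = 𝓕 f (y / (2 * π * ℏ)) := by
  rw [Real.fourier_real_eq_integral_exp_smul]
  congr 1 with w
  rw [smul_eq_mul, mul_comm]
  congr 2
  push_cast
  field_simp

theorem wignerTheta_eq_fourierInv {ℏ : ℝ} (hℏ : 0 < ℏ) (V : ℝ → ℝ) (f : ℝ → ℂ) (x v : ℝ) :
    wignerTheta ℏ V f x v = 𝓕⁻ (fun s ↦ wignerSymbol ℏ V x s * 𝓕 f s) v := by
  let G (s : ℝ) : ℂ := cexp (↑(2 * π * (v * s)) * I) *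
    (((V (x + π * ℏ * s) - V (x - π * ℏ * s) : ℝ) : ℂ) * 𝓕 f s)
  have hG (y : ℝ) : ((V (x + y / 2) - V (x - y / 2) : ℝ) : ℂ) * cexp (I * y * v / ℏ) *
      ∫ w : ℝ, f w * cexp (-I * y * w / ℏ) = G (y / (2 * π * ℏ)) := by
    have hy : π * ℏ * (y / (2 * π * ℏ)) = y / 2 := by field_simp
    have hphase : I * y * v / ℏ = ↑(2 * π * (v * (y / (2 * π * ℏ)))) * I := by
      push_cast
      field_simp
    rw [integral_mul_cexp_eq_fourier, hphase]
    simp only [G, hy]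
    ring
  calc wignerTheta ℏ V f x v
      = -I / (2 * π * ℏ ^ 2) * ∫ y : ℝ, G (y / (2 * π * ℏ)) := by
        simp only [wignerTheta, hG]
    _ = -I / ℏ * ∫ s, G s := by
        rw [Measure.integral_comp_div, abs_of_pos (by positivity), Complex.real_smul]
        push_cast
        field_simp
    _ = 𝓕⁻ (fun s ↦ wignerSymbol ℏ V x s * 𝓕 f s) v := by
        rw [Real.fourierInv_eq', ← integral_const_mul]
        congr 1 with s
        simp only [G, wignerSymbol, smul_eq_mul, RCLike.inner_apply, conj_trivial]
        ring

theorem wignerTheta_eq_fourierMultiplierCLM {ℏ : ℝ} (hℏ : 0 < ℏ) {V : ℝ → ℝ}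
    (hV : V.HasTemperateGrowth) (f : 𝓢(ℝ, ℂ)) (x v : ℝ) :
    wignerTheta ℏ V f x v = fourierMultiplierCLM ℂ (wignerSymbol ℏ V x) f v := by
  have hσ := hasTemperateGrowth_wignerSymbol ℏ hV x
  rw [wignerTheta_eq_fourierInv hℏ, SchwartzMap.fourierMultiplierCLM_apply,
    SchwartzMap.fourierInv_coe, SchwartzMap.smulLeftCLM_apply hσ, SchwartzMap.fourier_coe]
  simp only [smul_eq_mul]

theorem wignerTheta_first_moment_general {ℏ : ℝ} (hℏ : 0 < ℏ) {V : ℝ → ℝ}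
    (hV : V.HasTemperateGrowth) (x : ℝ) (f : 𝓢(ℝ, ℂ)) :
    (∫ v : ℝ, (v : ℂ) * wignerTheta ℏ V f x v) = (deriv V x : ℝ) * ∫ v : ℝ, f v := by
  have hσ := hasTemperateGrowth_wignerSymbol ℏ hV x
  have hV' : HasDerivAt V (deriv V x) x :=
    (hV.1.differentiable (by simp)).differentiableAt.hasDerivAt
  calc ∫ v : ℝ, (v : ℂ) * wignerTheta ℏ V f x v
      = ∫ v : ℝ, inner ℝ v 1 • fourierMultiplierCLM ℂ (wignerSymbol ℏ V x) f v := by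
        simp [wignerTheta_eq_fourierMultiplierCLM hℏ hV]
    _ = I / (2 * π) * deriv (wignerSymbol ℏ V x) 0 * ∫ v, f v := by
        rw [integral_inner_smul_fourierMultiplierCLM hσ, wignerSymbol_zero]
        simp
    _ = (deriv V x : ℝ) * ∫ v, f v := by
        rw [(hasDerivAt_wignerSymbol_zero hℏ.ne' hV').deriv]
        field_simp
        simp

/-- For a Schwartz potential `V` and a Schwartz function `f`, the first moment of the
nonlocal Wigner potential term satisfies `∫ v (Θ[V]f)(x,v) dv = V'(x) ∫ f(v) dv`. -/
theorem wignerTheta_first_moment (ℏ : ℝ) (hℏ : 0 < ℏ) (V : SchwartzMap ℝ ℝ) (x : ℝ)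
    (f : SchwartzMap ℝ ℂ) :
    (∫ v : ℝ, (v : ℂ) * wignerTheta ℏ (⇑V) (⇑f) x v) =
      ((deriv (⇑V) x : ℝ) : ℂ) * ∫ v : ℝ, f v :=
  wignerTheta_first_moment_general hℏ V.hasTemperateGrowth x f
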